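/- arXiv:2010.03850 — 4 statements merged into one kernel-verified Lean document; each statement's English description precedes it below -/
import Mathlib

section
/- Let x be a variable, and let δ and R be multisets of literals. Suppose an assignment σ exactly satisfies the clause (x ∨ δ). Then σ exactly satisfies the clause (δ ∨ R) if and only if σ exactly satisfies the clause (¬x ∨ R). -/
/-- A literal over a variable set `V` is a variable or its negation. -/
inductive Lit (V : Type*) where
  | pos : V → Lit V
  | neg : V → Lit V
  deriving DecidableEq

/-- Evaluation of a literal under an assignment `σ`. -/
def Lit.eval {V : Type*} (σ : V → Bool) : Lit V → Bool
  | .pos v => σ v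
  | .neg v => !σ v

/-- `σ` exactly satisfies a clause (multiset of literals) `C` if exactly one
literal of `C`, counted with multiplicity, evaluates to `true`. -/
def ExactSat {V : Type*} (σ : V → Bool) (C : Multiset (Lit V)) : Prop :=
  (C.countP fun l => Lit.eval σ l = true) = 1
theorem exactSat_append_iff_neg_cons {V : Type*}
    (σ : V → Bool) (x : V) (δ R : Multiset (Lit V))
    (h : ExactSat σ (Lit.pos x ::ₘ δ)) :
    ExactSat σ (δ + R) ↔ ExactSat σ (Lit.neg x ::ₘ R) := by
  have hp : Lit.eval σ (Lit.pos x) = σ x := rfl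
  have hn : Lit.eval σ (Lit.neg x) = !σ x := rfl
  unfold ExactSat at *
  rw [Multiset.countP_cons, hp] at h
  rw [Multiset.countP_add, Multiset.countP_cons, hn]
  cases hx : σ x <;> simp [hx] at h ⊢ <;> omega
end

section
/- Correctness of resolution: let x be a variable, let C, C' and α be multisets of literals, and suppose an assignment σ exactly satisfies both the clause (C ∨ x) and the clause (C' ∨ ¬x). Then σ exactly satisfies the clause (x ∨ α) if and only if σ exactly satisfies the clause (C' ∨ α). -/
theorem resolution_correct {V : Type*}
    (σ : V → Bool) (x : V) (C C' α : Multiset (Lit V))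
    (h1 : ExactSat σ (Lit.pos x ::ₘ C))
    (h2 : ExactSat σ (Lit.neg x ::ₘ C')) :
    ExactSat σ (Lit.pos x ::ₘ α) ↔ ExactSat σ (C' + α) := by
  unfold ExactSat at *
  rw [Multiset.countP_cons] at *
  rw [Multiset.countP_add]
  cases h : σ x <;> simp only [Lit.eval, h] at h1 h2 ⊢ <;> simp at h1 h2 ⊢ <;> grind
end

section
/- The unique real number β > 1 satisfying β^{−(7·0.8823)} + β^{−(4·0.8823 − 3·0.1177)} = 1 satisfies β < 1.1664. -/
theorem tau_333_lt (β : ℝ) (hβ : 1 < β)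
    (h : β ^ (-(7 * 0.8823) : ℝ) + β ^ (-(4 * 0.8823 - 3 * 0.1177) : ℝ) = 1) :
    β < 1.1664 := by
  by_contra hc
  have hc : (1.1664 : ℝ) ≤ β := not_lt.mp hc
  have h1 : β ^ (-(7 * 0.8823) : ℝ) ≤ (1.1664 : ℝ) ^ (-(7 * 0.8823) : ℝ) :=
    Real.rpow_le_rpow_of_nonpos (by norm_num) hc (by norm_num)
  have h2 : β ^ (-(4 * 0.8823 - 3 * 0.1177) : ℝ)
      ≤ (1.1664 : ℝ) ^ (-(4 * 0.8823 - 3 * 0.1177) : ℝ) :=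
    Real.rpow_le_rpow_of_nonpos (by norm_num) hc (by norm_num)
  have e1 : (1.1664 : ℝ) ^ (-(7 * 0.8823) : ℝ) ≤ (1.1664 : ℝ) ^ (-(7/40) + (-6 : ℤ) : ℝ) :=
    Real.rpow_le_rpow_of_exponent_le (by norm_num) (by norm_num)
  have e2 : (1.1664 : ℝ) ^ (-(4 * 0.8823 - 3 * 0.1177) : ℝ)
      ≤ (1.1664 : ℝ) ^ (-(7/40) + (-3 : ℤ) : ℝ) :=
    Real.rpow_le_rpow_of_exponent_le (by norm_num) (by norm_num)
  rw [Real.rpow_add (by norm_num), Real.rpow_intCast] at e1 e2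
  have hy : (0 : ℝ) < (1.1664 : ℝ) ^ (-(7/40) : ℝ) := Real.rpow_pos_of_pos (by norm_num) _
  have hp : ((1.1664 : ℝ) ^ (-(7/40) : ℝ)) ^ 40 = (1.1664 : ℝ) ^ (-7 : ℤ) := by
    rw [← Real.rpow_natCast, ← Real.rpow_mul (by norm_num), ← Real.rpow_intCast]
    norm_num
  generalize (1.1664 : ℝ) ^ (-(7/40) : ℝ) = y at *
  have hle : 1 ≤ y * ((1.1664 : ℝ) ^ (-6 : ℤ) + (1.1664 : ℝ) ^ (-3 : ℤ)) := by
    rw [mul_add]; linarith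
  have h40 := one_le_pow₀ hle (n := 40)
  rw [mul_pow, hp] at h40
  norm_num at h40
end

section
/- The unique real number β > 1 satisfying β^{−(6·0.8823 − 0.1177)} + β^{−(5·0.8823 − 2·0.1177)} = 1 satisfies β < 1.1605. -/
theorem tau_33neg3_lt (β : ℝ) (hβ : 1 < β)
    (h : β ^ (-(6 * 0.8823 - 0.1177) : ℝ) + β ^ (-(5 * 0.8823 - 2 * 0.1177) : ℝ) = 1) :
    β < 1.1605 := by
  by_contra hc
  push Not at hc
  have h1 : β ^ (-(6 * 0.8823 - 0.1177) : ℝ) ≤ (1.1605:ℝ) ^ (-(6 * 0.8823 - 0.1177) : ℝ) :=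
    Real.rpow_le_rpow_of_nonpos (by norm_num) hc (by norm_num)
  have h2 : β ^ (-(5 * 0.8823 - 2 * 0.1177) : ℝ)
      ≤ (1.1605:ℝ) ^ (-(5 * 0.8823 - 2 * 0.1177) : ℝ) :=
    Real.rpow_le_rpow_of_nonpos (by norm_num) hc (by norm_num)
  have h3 : (1.1605:ℝ) ^ (-(5 * 0.8823 - 2 * 0.1177) : ℝ) ≤ (1.1605:ℝ) ^ (-(238/57) : ℝ) :=
    Real.rpow_le_rpow_of_exponent_le (by norm_num) (by norm_num)
  have h4 : (1.1605:ℝ) ^ (-(6 * 0.8823 - 0.1177) : ℝ)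
      ≤ (1.1605:ℝ) ^ (-(238/57) : ℝ) * (1.1605)⁻¹ := by
    rw [← Real.rpow_neg_one (1.1605:ℝ), ← Real.rpow_add (by norm_num)]
    exact Real.rpow_le_rpow_of_exponent_le (by norm_num) (by norm_num)
  have h5 : ((1.1605:ℝ) ^ (-(238/57) : ℝ)) ^ 57 = ((1.1605:ℝ) ^ 238)⁻¹ := by
    rw [← Real.rpow_natCast, ← Real.rpow_mul (by norm_num), ← Real.rpow_natCast,
      ← Real.rpow_neg (by norm_num)]
    norm_num
  have h6 : (1.1605:ℝ) ^ (-(238/57) : ℝ) < 1.1605 / 2.1605 := by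
    apply lt_of_pow_lt_pow_left₀ 57 (by norm_num)
    rw [h5]
    norm_num
  have h7 : (1.1605:ℝ) ^ (-(238/57) : ℝ) * (1.1605)⁻¹ < 1.1605 / 2.1605 * (1.1605)⁻¹ :=
    mul_lt_mul_of_pos_right h6 (by norm_num)
  have h8 : (1.1605:ℝ) / 2.1605 * (1.1605)⁻¹ + 1.1605 / 2.1605 = 1 := by norm_num
  linarith
end
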